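/- Let B be the BlindOracle strategy. Then OBJ_B ≤ 3·OPT + 3η/k, where η = Σ_{t=1}^T |ν(t) − ω(t)| is the total prediction loss. In particular, the competitive ratio of BlindOracle is at most 3 + (3/k)·(η/OPT). -/

import Mathlib

namespace Caching

attribute [local instance low] Classical.propDecidable

/-- A run of a feasible eviction strategy on the request sequence `σ` with cache size `k`
and time horizon `T`.  `C t` is the cache after processing request `t` (with `C 0 = ∅`),
and `p t` is the page evicted at time `t` (meaningful at full-cache misses). -/
structure CacheRun (S : Type) [DecidableEq S] (k T : ℕ) (σ : ℕ → S) where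
  C : ℕ → Finset S
  p : ℕ → S
  init : C 0 = ∅
  card_le : ∀ t, (C t).card ≤ k
  hit : ∀ t, 1 ≤ t → t ≤ T → (σ t ∈ C (t - 1) ∨ (C (t - 1)).card < k) →
      C t = insert (σ t) (C (t - 1))
  evict_mem : ∀ t, 1 ≤ t → t ≤ T → σ t ∉ C (t - 1) → (C (t - 1)).card = k →
      p t ∈ C (t - 1)
  evict : ∀ t, 1 ≤ t → t ≤ T → σ t ∉ C (t - 1) → (C (t - 1)).card = k →
      C t = insert (σ t) ((C (t - 1)).erase (p t))

variable {S : Type} [DecidableEq S]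

/- `nextReq σ T t` is `ν(t)`: the first time `s > t` (with `s ≤ T`) at which the page
`σ t` is requested again, and `T + 1` if there is no such time. -/
open Classical in
noncomputable def nextReq (σ : ℕ → S) (T t : ℕ) : ℕ :=
  if h : ∃ s, t < s ∧ s ≤ T ∧ σ s = σ t then Nat.find h else T + 1

/-- The total prediction loss `η = Σ_{t=1}^T |ν(t) - ω(t)|`. -/
noncomputable def totalLoss (σ : ℕ → S) (T : ℕ) (ω : ℕ → ℕ) : ℕ :=
  ∑ t ∈ Finset.Icc 1 T, Nat.dist (nextReq σ T t) (ω t)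

/-- `I_Q(t)`: indices of the last requests (up to time `t`) of the currently cached pages. -/
noncomputable def lastIdx {k T : ℕ} {σ : ℕ → S} (R : CacheRun S k T σ) (t : ℕ) : Finset ℕ :=
  (Finset.Icc 1 t).filter fun i => σ i ∈ R.C t ∧ ∀ j ∈ Finset.Icc (i + 1) t, σ j ≠ σ i

/-- Time `t` is a full-cache miss (an eviction step). -/
def EvictStep {k T : ℕ} {σ : ℕ → S} (R : CacheRun S k T σ) (t : ℕ) : Prop :=
  1 ≤ t ∧ t ≤ T ∧ σ t ∉ R.C (t - 1) ∧ (R.C (t - 1)).card = k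

/-- At time `t` the run evicts the page whose last-request index is `i`. -/
def EvictsIdx {k T : ℕ} {σ : ℕ → S} (R : CacheRun S k T σ) (t i : ℕ) : Prop :=
  EvictStep R t ∧ i ∈ lastIdx R (t - 1) ∧ R.p t = σ i

/-- `OBJ_Q`: the number of cache misses of the run. -/
noncomputable def misses {k T : ℕ} {σ : ℕ → S} (R : CacheRun S k T σ) : ℕ :=
  ((Finset.Icc 1 T).filter fun t => σ t ∉ R.C (t - 1)).card

/-- Belady's algorithm: on a full-cache miss always evict the cached page with the
largest next-request time. -/
def IsBelady {k T : ℕ} {σ : ℕ → S} (A : CacheRun S k T σ) : Prop :=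
  ∀ t, EvictStep A t → ∀ i ∈ lastIdx A (t - 1), A.p t = σ i →
    ∀ j ∈ lastIdx A (t - 1), nextReq σ T j ≤ nextReq σ T i

/-- BlindOracle: on a full-cache miss always evict the cached page with the largest
predicted next-request time. -/
def IsBlindOracle {k T : ℕ} {σ : ℕ → S} (B : CacheRun S k T σ) (ω : ℕ → ℕ) : Prop :=
  ∀ t, EvictStep B t → ∀ i ∈ lastIdx B (t - 1), B.p t = σ i →
    ∀ j ∈ lastIdx B (t - 1), ω j ≤ ω i

/-- An eviction graph of a run: a directed graph on `{1,…,T}` whose every edge `(i, j)`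
corresponds to a distinct time (`time e`) at which the run made a mistake by evicting
page `σ j` while `i` was a strictly better eviction candidate in the cache. -/
structure EvictionGraph {k T : ℕ} {σ : ℕ → S} (R : CacheRun S k T σ) where
  E : Finset (ℕ × ℕ)
  time : ℕ × ℕ → ℕ
  time_inj : ∀ e ∈ E, ∀ e' ∈ E, time e = time e' → e = e'
  mistake : ∀ e ∈ E, EvictsIdx R (time e) e.2 ∧ e.1 ∈ lastIdx R (time e - 1) ∧
      nextReq σ T e.2 < nextReq σ T e.1

/-- The eviction at time `t` triggers the eviction at time `t'`: the page evicted
at `t` is next requested at `t' = ν(i)`, which is again an eviction step. -/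
def Triggers {k T : ℕ} {σ : ℕ → S} (R : CacheRun S k T σ) (t t' : ℕ) : Prop :=
  ∃ i, EvictsIdx R t i ∧ t' = nextReq σ T i ∧ ∃ j, EvictsIdx R t' j

/-- The eviction of the page with last-request index `i` triggers the eviction of the
page with last-request index `j` (at time `ν(i)`). -/
def TriggersIdx {k T : ℕ} {σ : ℕ → S} (R : CacheRun S k T σ) (i j : ℕ) : Prop :=
  (∃ t, EvictsIdx R t i) ∧ EvictsIdx R (nextReq σ T i) j

/-- The page requested at time `t` was never requested before. -/
def NewPage (σ : ℕ → S) (t : ℕ) : Prop := ∀ s, 1 ≤ s → s < t → σ s ≠ σ t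

/-- At time `t` the evicted page has the largest prediction among cached pages. -/
def BlindChoiceAt {k T : ℕ} {σ : ℕ → S} (R : CacheRun S k T σ) (ω : ℕ → ℕ) (t : ℕ) : Prop :=
  ∀ i ∈ lastIdx R (t - 1), R.p t = σ i → ∀ j ∈ lastIdx R (t - 1), ω j ≤ ω i

/-- Corrector's choice at time `t`: if some cached page has a provably wrong prediction
(`ω i < t`), evict such a page with minimal prediction; otherwise act as BlindOracle. -/
def CorrectorChoiceAt {k T : ℕ} {σ : ℕ → S} (R : CacheRun S k T σ) (ω : ℕ → ℕ) (t : ℕ) :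
    Prop :=
  ((∃ i ∈ lastIdx R (t - 1), ω i < t) →
    ∀ i ∈ lastIdx R (t - 1), R.p t = σ i →
      ω i < t ∧ ∀ j ∈ lastIdx R (t - 1), ω j < t → ω i ≤ ω j) ∧
  ((¬ ∃ i ∈ lastIdx R (t - 1), ω i < t) → BlindChoiceAt R ω t)

/-- The page requested at time `t` was last evicted (before `t`) at a step labeled with
strategy `s₀` (0 = BlindOracle, 1 = RandomAlg, 2 = Corrector). -/
def LastEvictedWith {k T : ℕ} {σ : ℕ → S} (R : CacheRun S k T σ) (strat : ℕ → Fin 3)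
    (t : ℕ) (s₀ : Fin 3) : Prop :=
  ∃ t₀, t₀ < t ∧ EvictStep R t₀ ∧ R.p t₀ = σ t ∧ strat t₀ = s₀ ∧
    ∀ t₁, t₀ < t₁ → t₁ < t → ¬(EvictStep R t₁ ∧ R.p t₁ = σ t)

/-- A run of the AlternatingOracle strategy (for a fixed realization of its random
choices), together with the labeling `strat` of which of the three strategies was used
at each eviction step: on a miss for a never-requested page use BlindOracle; if the
requested page was last evicted by BlindOracle use RandomAlg (an arbitrary cached page);
if by RandomAlg use Corrector; if by Corrector use BlindOracle. -/
def IsAlternatingOracle {k T : ℕ} {σ : ℕ → S} (R : CacheRun S k T σ) (ω : ℕ → ℕ)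
    (strat : ℕ → Fin 3) : Prop :=
  ∀ t, EvictStep R t →
    (NewPage σ t → strat t = 0 ∧ BlindChoiceAt R ω t) ∧
    (LastEvictedWith R strat t 0 → strat t = 1) ∧
    (LastEvictedWith R strat t 1 → strat t = 2 ∧ CorrectorChoiceAt R ω t) ∧
    (LastEvictedWith R strat t 2 → strat t = 0 ∧ BlindChoiceAt R ω t)

/-- AlternatingOracle driven by a seed `u` of uniform random values: at each eviction
step performed by RandomAlg at time `t`, the evicted page is the one whose last-request
index has rank `u t` among the `k` cached indices, so that for a uniformly random seed
the evicted page is uniform over the cache. -/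
def IsAlternatingOracleSeeded {k T : ℕ} {σ : ℕ → S} (R : CacheRun S k T σ) (ω : ℕ → ℕ)
    (strat : ℕ → Fin 3) (u : Fin (T + 1) → Fin k) : Prop :=
  IsAlternatingOracle R ω strat ∧
  ∀ t (h : EvictStep R t), strat t = 1 →
    ∀ i ∈ lastIdx R (t - 1), R.p t = σ i →
      ((lastIdx R (t - 1)).filter fun j => j < i).card =
        ((u ⟨t, Nat.lt_succ_of_le h.2.1⟩ : Fin k) : ℕ)

/-- The family of runs is adapted to the seeds: the behavior up to time `t` depends only
on the seed values with index at most `t` (the strategy is online). -/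
def Adapted {k T : ℕ} {σ : ℕ → S} (R : (Fin (T + 1) → Fin k) → CacheRun S k T σ)
    (strat : (Fin (T + 1) → Fin k) → ℕ → Fin 3) : Prop :=
  ∀ u u' t, (∀ s : Fin (T + 1), (s : ℕ) ≤ t → u s = u' s) →
    (R u).C t = (R u').C t ∧ (R u).p t = (R u').p t ∧ strat u t = strat u' t

/-- The probability of the outcome `x` for `T` i.i.d. Bernoulli(γ) random bits. -/
noncomputable def bernWeight (γ : ℝ) {T : ℕ} (x : Fin T → Bool) : ℝ :=
  ∏ i, if x i then γ else 1 - γ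

/-- `S(x, m)`: the number of ones among the first `m` coordinates of `x`. -/
noncomputable def scount {T : ℕ} (x : Fin T → Bool) (m : ℕ) : ℕ :=
  (Finset.univ.filter fun i : Fin T => (i : ℕ) < m ∧ x i).card

/-! ### Requests and next requests -/

/-- Last request of the page `s` up to time `t` (`0` if there is none). -/
noncomputable def lst (σ : ℕ → S) (s : S) (t : ℕ) : ℕ :=
  Nat.findGreatest (fun i => 1 ≤ i ∧ σ i = s) t

lemma lst_spec (σ : ℕ → S) (s : S) (t : ℕ) (h : ∃ i, 1 ≤ i ∧ i ≤ t ∧ σ i = s) :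
    1 ≤ lst σ s t ∧ lst σ s t ≤ t ∧ σ (lst σ s t) = s ∧
      ∀ j, lst σ s t < j → j ≤ t → σ j ≠ s := by
  obtain ⟨i, h1, h2, h3⟩ := h
  have := Nat.findGreatest_spec (P := fun i => 1 ≤ i ∧ σ i = s) h2 ⟨h1, h3⟩
  refine ⟨this.1, Nat.findGreatest_le t, this.2, ?_⟩
  intro j hj hjt hs
  exact Nat.findGreatest_is_greatest hj hjt ⟨by omega, hs⟩

lemma lst_succ_ne (σ : ℕ → S) (s : S) (t : ℕ) (h : σ (t + 1) ≠ s) :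
    lst σ s (t + 1) = lst σ s t :=
  Nat.findGreatest_of_not (fun h' => h h'.2)

lemma lst_eq_of_no_req (σ : ℕ → S) (s : S) (t t' : ℕ) (htt : t ≤ t')
    (h : ∀ j, t < j → j ≤ t' → σ j ≠ s) : lst σ s t' = lst σ s t := by
  induction t', htt using Nat.le_induction with
  | base => rfl
  | succ n hn ih =>
    rw [lst_succ_ne _ _ _ (h (n + 1) (by omega) le_rfl)]
    exact ih (fun j h1 h2 => h j h1 (by omega))

lemma nextReq_le (σ : ℕ → S) (T i : ℕ) : nextReq σ T i ≤ T + 1 := by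
  unfold nextReq
  split_ifs with h
  · have := (Nat.find_spec h).2.1; omega
  · exact le_rfl

lemma nextReq_spec (σ : ℕ → S) (T i : ℕ) (h : nextReq σ T i ≤ T) :
    i < nextReq σ T i ∧ σ (nextReq σ T i) = σ i := by
  unfold nextReq at h ⊢
  split_ifs at h ⊢ with h'
  · have := Nat.find_spec h'; exact ⟨this.1, this.2.2⟩
  · omega

lemma nextReq_gt (σ : ℕ → S) (T i t : ℕ) (hit : i ≤ t) (ht : t ≤ T)
    (h : ∀ j, i < j → j ≤ t → σ j ≠ σ i) : t < nextReq σ T i := by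
  by_contra hc
  push Not at hc
  have := nextReq_spec σ T i (by omega)
  exact h _ this.1 hc this.2

lemma nextReq_eq (σ : ℕ → S) (T i m : ℕ) (him : i < m) (hm : m ≤ T) (hs : σ m = σ i)
    (h : ∀ j, i < j → j < m → σ j ≠ σ i) : nextReq σ T i = m := by
  apply le_antisymm
  · unfold nextReq
    have h' : ∃ s, i < s ∧ s ≤ T ∧ σ s = σ i := ⟨m, him, hm, hs⟩
    rw [dif_pos h']
    exact Nat.find_min' h' ⟨him, hm, hs⟩
  · have := nextReq_gt σ T i (m - 1) (by omega) (by omega) (fun j h1 h2 => h j h1 (by omega))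
    omega

/-! ### Cache basics -/

section
variable {k T : ℕ} {σ : ℕ → S}

lemma C_hit (R : CacheRun S k T σ) (t : ℕ) (ht : t < T) (h : σ (t + 1) ∈ R.C t) :
    R.C (t + 1) = R.C t := by
  have := R.hit (t + 1) (by omega) (by omega) (Or.inl (by simpa using h))
  rw [this]; simpa using h

lemma C_fill (R : CacheRun S k T σ) (t : ℕ) (ht : t < T) (h : (R.C t).card < k) :
    R.C (t + 1) = insert (σ (t + 1)) (R.C t) := by
  simpa using R.hit (t + 1) (by omega) (by omega) (Or.inr (by simpa using h))

lemma C_evict (R : CacheRun S k T σ) (t : ℕ) (ht : t < T) (h : σ (t + 1) ∉ R.C t)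
    (hc : (R.C t).card = k) :
    EvictStep R (t + 1) ∧ R.p (t + 1) ∈ R.C t ∧
    R.C (t + 1) = insert (σ (t + 1)) ((R.C t).erase (R.p (t + 1))) := by
  refine ⟨⟨by omega, by omega, by simpa using h, by simpa using hc⟩, ?_, ?_⟩
  · simpa using R.evict_mem (t + 1) (by omega) (by omega) (by simpa using h) (by simpa using hc)
  · simpa using R.evict (t + 1) (by omega) (by omega) (by simpa using h) (by simpa using hc)

lemma C_cases (R : CacheRun S k T σ) (t : ℕ) (ht : t < T) :
    (σ (t + 1) ∈ R.C t ∧ R.C (t + 1) = R.C t) ∨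
    (σ (t + 1) ∉ R.C t ∧ (R.C t).card < k ∧ R.C (t + 1) = insert (σ (t + 1)) (R.C t)) ∨
    (σ (t + 1) ∉ R.C t ∧ (R.C t).card = k ∧ EvictStep R (t + 1) ∧ R.p (t + 1) ∈ R.C t ∧
      R.C (t + 1) = insert (σ (t + 1)) ((R.C t).erase (R.p (t + 1)))) := by
  by_cases h : σ (t + 1) ∈ R.C t
  · exact Or.inl ⟨h, C_hit R t ht h⟩
  · rcases (R.card_le t).lt_or_eq with h' | h'
    · exact Or.inr (Or.inl ⟨h, h', C_fill R t ht h'⟩)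
    · exact Or.inr (Or.inr ⟨h, h', C_evict R t ht h h'⟩)

lemma mem_self (R : CacheRun S k T σ) (t : ℕ) (h1 : 1 ≤ t) (ht : t ≤ T) : σ t ∈ R.C t := by
  obtain ⟨t, rfl⟩ : ∃ u, t = u + 1 := ⟨t - 1, by omega⟩
  rcases C_cases R t (by omega) with h | h | h
  · rw [h.2]; exact h.1
  · rw [h.2.2]; simp
  · rw [h.2.2.2.2]; simp

lemma C_requested (R : CacheRun S k T σ) (t : ℕ) (ht : t ≤ T) (s : S) (hs : s ∈ R.C t) :
    ∃ i, 1 ≤ i ∧ i ≤ t ∧ σ i = s := by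
  induction t with
  | zero => rw [R.init] at hs; simp at hs
  | succ t ih =>
    by_cases he : σ (t + 1) = s
    · exact ⟨t + 1, by omega, le_rfl, he⟩
    · have hs' : s ∈ R.C t := by
        rcases C_cases R t (by omega) with h | h | h
        · rw [← h.2]; exact hs
        · rw [h.2.2] at hs; simp only [Finset.mem_insert] at hs; tauto
        · rw [h.2.2.2.2] at hs; simp only [Finset.mem_insert, Finset.mem_erase] at hs; tauto
      obtain ⟨i, h1, h2, h3⟩ := ih (by omega) hs'
      exact ⟨i, h1, by omega, h3⟩

/-- Two runs agree until both are full. -/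
lemma same_or_full (A B : CacheRun S k T σ) (t : ℕ) (ht : t ≤ T) :
    A.C t = B.C t ∨ ((A.C t).card = k ∧ (B.C t).card = k) := by
  have full : ∀ R : CacheRun S k T σ, ∀ t < T, (R.C t).card = k → (R.C (t + 1)).card = k := by
    intro R t ht hc
    rcases C_cases R t ht with h | h | h
    · rw [h.2]; exact hc
    · omega
    · rw [h.2.2.2.2, Finset.card_insert_of_notMem (by simp [h.1]),
        Finset.card_erase_of_mem h.2.2.2.1]
      have := Finset.card_pos.2 ⟨_, h.2.2.2.1⟩
      omega
  induction t with
  | zero => left; rw [A.init, B.init]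
  | succ t ih =>
    have both : (A.C t).card = k → (B.C t).card = k →
        ((A.C (t + 1)).card = k ∧ (B.C (t + 1)).card = k) := fun h1 h2 =>
      ⟨full A t (by omega) h1, full B t (by omega) h2⟩
    rcases ih (by omega) with h | h
    · rcases (A.card_le t).lt_or_eq with h' | h'
      · left
        rw [C_fill A t (by omega) h', C_fill B t (by omega) (h ▸ h'), h]
      · right; exact both h' (h ▸ h')
    · right; exact both h.1 h.2

/-- Last eviction time of the page `h` up to time `t`. -/
noncomputable def evt (R : CacheRun S k T σ) (h : S) (t : ℕ) : ℕ :=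
  Nat.findGreatest (fun e => EvictStep R e ∧ R.p e = h) t

lemma evt_mono (R : CacheRun S k T σ) (h : S) (t : ℕ) : evt R h t ≤ evt R h (t + 1) :=
  Nat.findGreatest_mono_right _ (Nat.le_succ t)

lemma evt_self (R : CacheRun S k T σ) (t : ℕ) (h : EvictStep R t) : evt R (R.p t) t = t :=
  Nat.findGreatest_eq (P := fun e => EvictStep R e ∧ R.p e = R.p t) ⟨h, rfl⟩

lemma evt_le (R : CacheRun S k T σ) (h : S) (t : ℕ) : evt R h t ≤ t := Nat.findGreatest_le t

lemma stays (R : CacheRun S k T σ) (h : S) (u t : ℕ) (hut : u ≤ t) (ht : t ≤ T)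
    (hu : h ∈ R.C u) (hne : ∀ e, u < e → e ≤ t → ¬ (EvictStep R e ∧ R.p e = h)) : h ∈ R.C t := by
  induction t, hut using Nat.le_induction with
  | base => exact hu
  | succ n hn ih =>
    have hn := ih (by omega) (fun e h1 h2 => hne e h1 (by omega))
    have hx := hne (n + 1) (by omega) le_rfl
    rcases C_cases R n (by omega) with h' | h' | h'
    · rw [h'.2]; exact hn
    · rw [h'.2.2]; simp [hn]
    · rw [h'.2.2.2.2]
      simp only [Finset.mem_insert, Finset.mem_erase]
      right
      exact ⟨fun e => hx ⟨h'.2.2.1, e.symm⟩, hn⟩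

/-- A page requested before `t` but not in the cache after `t` was evicted at time
`evt R h t` and not requested since. -/
lemma evt_spec (R : CacheRun S k T σ) (h : S) (t : ℕ) (ht : t ≤ T)
    (hreq : ∃ i, 1 ≤ i ∧ i ≤ t ∧ σ i = h) (hn : h ∉ R.C t) :
    EvictStep R (evt R h t) ∧ R.p (evt R h t) = h ∧
      ∀ j, evt R h t ≤ j → j ≤ t → σ j ≠ h := by
  have nostay : ∀ j, 1 ≤ j → evt R h t < j → j ≤ t → σ j ≠ h := by
    intro j h0 h1 h2 h3
    apply hn
    refine stays R h j t h2 ht (h3 ▸ mem_self R j h0 (by omega)) ?_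
    intro e he1 he2
    exact Nat.findGreatest_is_greatest (P := fun e => EvictStep R e ∧ R.p e = h)
      (show evt R h t < e by omega) he2
  have hpos : evt R h t ≠ 0 := by
    intro h0
    obtain ⟨i, h1, h2, h3⟩ := hreq
    exact nostay i h1 (by omega) h2 h3
  have hspec : EvictStep R (evt R h t) ∧ R.p (evt R h t) = h :=
    Nat.findGreatest_of_ne_zero (P := fun e => EvictStep R e ∧ R.p e = h) rfl hpos
  refine ⟨hspec.1, hspec.2, ?_⟩
  intro j h1 h2
  rcases h1.eq_or_lt with h1 | h1
  · rw [← h1]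
    have hE := hspec.1
    have := R.evict_mem _ hE.1 hE.2.1 hE.2.2.1 hE.2.2.2
    rw [hspec.2] at this
    intro e
    exact hE.2.2.1 (by rw [e]; exact this)
  · exact nostay j (by omega) h1 h2

lemma lst_mem_lastIdx (R : CacheRun S k T σ) (t : ℕ) (ht : t ≤ T) (s : S) (hs : s ∈ R.C t) :
    lst σ s t ∈ lastIdx R t := by
  obtain ⟨h1, h2, h3, h4⟩ := lst_spec σ s t (C_requested R t ht s hs)
  unfold lastIdx
  simp only [Finset.mem_filter, Finset.mem_Icc]
  refine ⟨⟨h1, h2⟩, by rwa [h3], ?_⟩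
  intro j hj
  rw [h3]; exact h4 j (by omega) hj.2

lemma blind_max (B : CacheRun S k T σ) (ω : ℕ → ℕ) (hB : IsBlindOracle B ω) (e : ℕ)
    (he : EvictStep B e) (s : S) (hs : s ∈ B.C (e - 1)) :
    ω (lst σ s (e - 1)) ≤ ω (lst σ (B.p e) (e - 1)) := by
  have h1 := he.1
  have h2 := he.2.1
  have hp := B.evict_mem _ he.1 he.2.1 he.2.2.1 he.2.2.2
  exact hB e he _ (lst_mem_lastIdx B _ (by omega) _ hp)
    (lst_spec σ _ _ (C_requested B _ (by omega) _ hp)).2.2.1.symm _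
    (lst_mem_lastIdx B _ (by omega) _ hs)

/-- Misses up to time `t`. -/
noncomputable def missUp (R : CacheRun S k T σ) (t : ℕ) : ℕ :=
  ((Finset.Icc 1 t).filter fun u => σ u ∉ R.C (u - 1)).card

lemma missUp_succ (R : CacheRun S k T σ) (t : ℕ) :
    missUp R (t + 1) = missUp R t + (if σ (t + 1) ∈ R.C t then 0 else 1) := by
  unfold missUp
  rw [← Finset.insert_Icc_right_eq_Icc_add_one (by omega), Finset.filter_insert]
  have : t + 1 ∉ (Finset.Icc 1 t).filter fun u => σ u ∉ R.C (u - 1) := by simp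
  by_cases h : σ (t + 1) ∈ R.C t
  · simp [h]
  · simp [h]

lemma card_le_missUp (R : CacheRun S k T σ) (t : ℕ) (ht : t ≤ T) :
    (R.C t).card ≤ missUp R t := by
  induction t with
  | zero => rw [R.init]; simp
  | succ t ih =>
    have := ih (by omega)
    rw [missUp_succ]
    rcases C_cases R t (by omega) with h | h | h
    · rw [h.2]; omega
    · rw [h.2.2, if_neg h.1]
      have := Finset.card_insert_le (σ (t + 1)) (R.C t)
      omega
    · have := R.card_le (t + 1)
      omega

lemma missUp_mono (R : CacheRun S k T σ) (t : ℕ) (ht : t ≤ T) :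
    missUp R t ≤ misses R := by
  apply Finset.card_le_card
  apply Finset.filter_subset_filter
  exact Finset.Icc_subset_Icc_right ht

end

/-! ### Counting losses -/

/-- Number of predictions that are wrong at time `τ`. -/
noncomputable def wrongAt (σ : ℕ → S) (T : ℕ) (ω : ℕ → ℕ) (τ : ℕ) : ℕ :=
  ((Finset.Icc 1 T).filter fun i =>
    (ω i ≤ τ ∧ τ < nextReq σ T i) ∨ (nextReq σ T i ≤ τ ∧ τ < ω i)).card

lemma sum_wrongAt (σ : ℕ → S) (T : ℕ) (ω : ℕ → ℕ) :
    ∑ τ ∈ Finset.Icc 1 T, wrongAt σ T ω τ ≤ totalLoss σ T ω := by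
  unfold wrongAt totalLoss
  simp_rw [Finset.card_filter]
  rw [Finset.sum_comm]
  apply Finset.sum_le_sum
  intro i _
  rw [← Finset.card_filter]
  have : ((Finset.Icc 1 T).filter fun τ =>
      (ω i ≤ τ ∧ τ < nextReq σ T i) ∨ (nextReq σ T i ≤ τ ∧ τ < ω i)) ⊆
      Finset.Ico (ω i) (nextReq σ T i) ∪ Finset.Ico (nextReq σ T i) (ω i) := by
    intro τ
    simp only [Finset.mem_filter, Finset.mem_union, Finset.mem_Ico]
    tauto
  refine (Finset.card_le_card this).trans ((Finset.card_union_le _ _).trans ?_)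
  simp only [Nat.card_Ico, Nat.dist]
  omega

section
variable {k T : ℕ} {σ : ℕ → S}

lemma inv_claim1 (B : CacheRun S k T σ) (ω : ℕ → ℕ) (hB : IsBlindOracle B ω) (m : ℕ)
    (hm1 : 1 ≤ m) (hmT : m ≤ T) (hmiss : σ m ∉ B.C (m - 1))
    (hreq : ∃ i, 1 ≤ i ∧ i ≤ m - 1 ∧ σ i = σ m)
    (hek : evt B (σ m) (m - 1) + k ≤ T) :
    k - (m - evt B (σ m) (m - 1)) ≤ 2 * (ω (lst σ (σ m) (m - 1)) - m) +
      ((Finset.Icc 1 T).filter fun i => ω i < nextReq σ T i ∧ m < nextReq σ T i ∧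
        2 * ω i < m + nextReq σ T i).card := by
  obtain ⟨hE, hp, hno⟩ := evt_spec B (σ m) (m - 1) (by omega) hreq hmiss
  have hem := evt_le B (σ m) (m - 1)
  set e := evt B (σ m) (m - 1) with he
  have he1 := hE.1
  have hq : lst σ (σ m) (m - 1) = lst σ (σ m) (e - 1) :=
    lst_eq_of_no_req σ _ _ _ (by omega) (fun j h1 h2 => hno j (by omega) h2)
  have hmax : ∀ s ∈ B.C (e - 1), ω (lst σ s (e - 1)) ≤ ω (lst σ (σ m) (m - 1)) := by
    intro s hs
    rw [hq, ← hp]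
    exact blind_max B ω hB e hE s hs
  set w := ω (lst σ (σ m) (m - 1)) with hw
  have hl : ∀ s ∈ B.C (e - 1), 1 ≤ lst σ s (e - 1) ∧ lst σ s (e - 1) ≤ e - 1 ∧
      σ (lst σ s (e - 1)) = s ∧ ∀ j, lst σ s (e - 1) < j → j ≤ e - 1 → σ j ≠ s :=
    fun s hs => lst_spec σ s _ (C_requested B _ (by omega) s hs)
  have hN : ∀ s ∈ B.C (e - 1), e - 1 < nextReq σ T (lst σ s (e - 1)) := by
    intro s hs
    obtain ⟨h1, h2, h3, h4⟩ := hl s hs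
    exact nextReq_gt σ T _ _ h2 (by omega) (fun j h5 h6 => by rw [h3]; exact h4 j h5 h6)
  have hNs : ∀ s ∈ B.C (e - 1), nextReq σ T (lst σ s (e - 1)) ≤ T →
      σ (nextReq σ T (lst σ s (e - 1))) = s := by
    intro s hs h
    rw [(nextReq_spec σ T _ h).2]; exact (hl s hs).2.2.1
  by_cases hbig : T < m + 2 * (w - m)
  · omega
  set N : S → ℕ := fun s => nextReq σ T (lst σ s (e - 1)) with hNdef
  have c0 : (B.C (e - 1)).card = k := hE.2.2.2
  have c1 : ((B.C (e - 1)).filter fun s => N s ≤ m).card ≤ m - e := by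
    have : (Finset.Ioc e m).card = m - e := Nat.card_Ioc e m
    rw [← this]
    apply Finset.card_le_card_of_injOn N
    · intro s hs
      simp only [Finset.coe_filter, Set.mem_setOf_eq] at hs
      simp only [Finset.coe_Ioc, Set.mem_Ioc]
      refine ⟨?_, hs.2⟩
      have h1 := hN s hs.1
      have h2 : N s ≠ e := by
        intro h
        have h3 := hNs s hs.1 (by have := hs.2; simp only [hNdef] at this; omega)
        have h4 : σ e = s := by rw [← h]; exact h3
        exact hE.2.2.1 (h4 ▸ hs.1)
      simp only [hNdef] at h2 ⊢
      omega
    · intro s hs s' hs' h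
      simp only [Finset.coe_filter, Set.mem_setOf_eq] at hs hs'
      have h3 := hNs s hs.1 (hs.2.trans hmT)
      have h4 := hNs s' hs'.1 (hs'.2.trans hmT)
      rw [← h3, ← h4]
      exact congrArg σ h
  have c2 : ((B.C (e - 1)).filter fun s => m < N s ∧ N s ≤ m + 2 * (w - m)).card
      ≤ 2 * (w - m) := by
    have : (Finset.Ioc m (m + 2 * (w - m))).card = 2 * (w - m) := by
      rw [Nat.card_Ioc]; omega
    refine le_trans (Finset.card_le_card_of_injOn (t := Finset.Ioc m (m + 2 * (w - m))) N ?_ ?_)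
      this.le
    · intro s hs
      simp only [Finset.coe_filter, Set.mem_setOf_eq] at hs
      simp only [Finset.coe_Ioc, Set.mem_Ioc]
      exact hs.2
    · intro s hs s' hs' h
      simp only [Finset.coe_filter, Set.mem_setOf_eq] at hs hs'
      have h3 := hNs s hs.1 (hs.2.2.trans (by omega))
      have h4 := hNs s' hs'.1 (hs'.2.2.trans (by omega))
      rw [← h3, ← h4]
      exact congrArg σ h
  have c3 : ((B.C (e - 1)).filter fun s => m + 2 * (w - m) < N s).card ≤
      ((Finset.Icc 1 T).filter fun i => ω i < nextReq σ T i ∧ m < nextReq σ T i ∧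
        2 * ω i < m + nextReq σ T i).card := by
    apply Finset.card_le_card_of_injOn (fun s => lst σ s (e - 1))
    · intro s hs
      simp only [Finset.coe_filter, Set.mem_setOf_eq] at hs
      have h1 := hl s hs.1
      have h2 := hmax s hs.1
      have h3 := hs.2
      simp only [hNdef] at h3
      simp only [Finset.coe_filter, Set.mem_setOf_eq, Finset.mem_Icc]
      refine ⟨⟨h1.1, by omega⟩, ?_, ?_, ?_⟩ <;> omega
    · intro s hs s' hs' h
      simp only [Finset.coe_filter, Set.mem_setOf_eq] at hs hs'
      rw [← (hl s hs.1).2.2.1, ← (hl s' hs'.1).2.2.1]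
      exact congrArg σ h
  have csum : (B.C (e - 1)).card ≤ ((B.C (e - 1)).filter fun s => N s ≤ m).card +
      ((B.C (e - 1)).filter fun s => m < N s ∧ N s ≤ m + 2 * (w - m)).card +
      ((B.C (e - 1)).filter fun s => m + 2 * (w - m) < N s).card := by
    refine le_trans (Finset.card_le_card ?_) ((Finset.card_union_le _ _).trans
      (Nat.add_le_add_right (Finset.card_union_le _ _) _))
    intro s hs
    simp only [Finset.mem_union, Finset.mem_filter, hs, true_and]
    omega
  omega

lemma sum_inv (B : CacheRun S k T σ) (ω : ℕ → ℕ) (hB : IsBlindOracle B ω) (J : Finset ℕ)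
    (hJ : ∀ m ∈ J, 1 ≤ m ∧ m ≤ T ∧ σ m ∉ B.C (m - 1) ∧
      (∃ i, 1 ≤ i ∧ i ≤ m - 1 ∧ σ i = σ m) ∧ evt B (σ m) (m - 1) + k ≤ T) :
    ∑ m ∈ J, (k - (m - evt B (σ m) (m - 1))) ≤ 2 * totalLoss σ T ω := by
  have hqs : ∀ m ∈ J, 1 ≤ lst σ (σ m) (m - 1) ∧ lst σ (σ m) (m - 1) ≤ T ∧
      nextReq σ T (lst σ (σ m) (m - 1)) = m := by
    intro m hm
    obtain ⟨h1, h2, h3, h4, h5⟩ := hJ m hm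
    obtain ⟨g1, g2, g3, g4⟩ := lst_spec σ (σ m) (m - 1) h4
    refine ⟨g1, by omega, ?_⟩
    exact nextReq_eq σ T _ m (by omega) h2 g3.symm
      (fun j h6 h7 => by rw [g3]; exact g4 j h6 (by omega))
  have s1 : ∑ m ∈ J, (k - (m - evt B (σ m) (m - 1))) ≤
      ∑ m ∈ J, 2 * (ω (lst σ (σ m) (m - 1)) - m) +
      ∑ m ∈ J, ((Finset.Icc 1 T).filter fun i => ω i < nextReq σ T i ∧ m < nextReq σ T i ∧
        2 * ω i < m + nextReq σ T i).card := by
    rw [← Finset.sum_add_distrib]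
    apply Finset.sum_le_sum
    intro m hm
    obtain ⟨h1, h2, h3, h4, h5⟩ := hJ m hm
    exact inv_claim1 B ω hB m h1 h2 h3 h4 h5
  have s2 : ∑ m ∈ J, ((Finset.Icc 1 T).filter fun i => ω i < nextReq σ T i ∧
      m < nextReq σ T i ∧ 2 * ω i < m + nextReq σ T i).card ≤
      ∑ i ∈ Finset.Icc 1 T, 2 * (nextReq σ T i - ω i) := by
    simp_rw [Finset.card_filter]
    rw [Finset.sum_comm]
    apply Finset.sum_le_sum
    intro i _
    rw [← Finset.card_filter]
    have : (J.filter fun m => ω i < nextReq σ T i ∧ m < nextReq σ T i ∧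
        2 * ω i < m + nextReq σ T i) ⊆
        Finset.Ico (nextReq σ T i - 2 * (nextReq σ T i - ω i)) (nextReq σ T i) := by
      intro m
      simp only [Finset.mem_filter, Finset.mem_Ico]
      omega
    refine (Finset.card_le_card this).trans ?_
    rw [Nat.card_Ico]
    omega
  have s3 : ∑ m ∈ J, 2 * (ω (lst σ (σ m) (m - 1)) - m) ≤
      ∑ i ∈ Finset.Icc 1 T, 2 * (ω i - nextReq σ T i) := by
    have : ∑ m ∈ J, 2 * (ω (lst σ (σ m) (m - 1)) - m) =
        ∑ i ∈ J.image (fun m => lst σ (σ m) (m - 1)), 2 * (ω i - nextReq σ T i) := by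
      rw [Finset.sum_image]
      · apply Finset.sum_congr rfl
        intro m hm
        rw [(hqs m hm).2.2]
      · intro m hm m' hm' h
        rw [← (hqs m hm).2.2, ← (hqs m' hm').2.2]
        exact congrArg _ h
    rw [this]
    apply Finset.sum_le_sum_of_subset
    intro i hi
    obtain ⟨m, hm, rfl⟩ := Finset.mem_image.1 hi
    exact Finset.mem_Icc.2 ⟨(hqs m hm).1, (hqs m hm).2.1⟩
  have s4 : ∑ i ∈ Finset.Icc 1 T, 2 * (ω i - nextReq σ T i) +
      ∑ i ∈ Finset.Icc 1 T, 2 * (nextReq σ T i - ω i) = 2 * totalLoss σ T ω := by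
    unfold totalLoss
    rw [← Finset.sum_add_distrib, Finset.mul_sum]
    apply Finset.sum_congr rfl
    intro i _
    simp only [Nat.dist]
    omega
  omega

end

/-! ### Abstract matching state -/

/-- Matching state between holes (pages in `A \ B`) and bad pages (pages in `B \ A`). -/
structure Core (A B : Finset S) (W : S → ℕ) (om nu : ℕ → ℕ) (T t : ℕ)
    (D1 D2 : Finset S) (f : S → S) (a : S → ℕ) : Prop where
  s21 : ∀ h ∈ D2, h ∈ D1
  s1 : ∀ h ∈ D1, h ∈ A ∧ h ∉ B
  fm : ∀ h ∈ D1, f h ∈ B ∧ f h ∉ A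
  inj : ∀ h ∈ D1, ∀ h' ∈ D1, f h = f h' → h = h'
  good : ∀ h ∈ D1, W (f h) ≤ W h
  anc : ∀ h ∈ D2, 1 ≤ a h ∧ a h ≤ T ∧ nu (a h) ≤ t ∧ W (f h) ≤ om (a h)
  ainj : ∀ h ∈ D2, ∀ h' ∈ D2, a h = a h' → h = h'

lemma reroute (A B : Finset S) (W : S → ℕ) (om nu : ℕ → ℕ) (T t : ℕ)
    (D1 D2 : Finset S) (f : S → S) (a : S → ℕ) (q : S)
    (hcard : A.card = B.card)
    (s21 : ∀ h ∈ D2, h ∈ D1)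
    (s1 : ∀ h ∈ D1, h ∈ A ∧ h ∉ B)
    (fm : ∀ h ∈ D1, f h ≠ q → f h ∈ B ∧ f h ∉ A)
    (inj : ∀ h ∈ D1, ∀ h' ∈ D1, f h = f h' → h = h')
    (good : ∀ h ∈ D1, W (f h) ≤ W h)
    (anc : ∀ h ∈ D2, 1 ≤ a h ∧ a h ≤ T ∧ nu (a h) ≤ t ∧ W (f h) ≤ om (a h))
    (ainj : ∀ h ∈ D2, ∀ h' ∈ D2, a h = a h' → h = h')
    (hq : ∀ g ∈ B, g ∉ A → W g ≤ W q) :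
    ∃ f', Core A B W om nu T t D1 D2 f' a := by
  by_cases hz : ∃ z ∈ D1, f z = q
  · obtain ⟨z, hz1, hzq⟩ := hz
    have hlt : ((D1.erase z).image f).card < (B \ A).card := by
      have h1 : ((D1.erase z).image f).card ≤ (D1.erase z).card := Finset.card_image_le
      have h2 : (D1.erase z).card < D1.card := Finset.card_erase_lt_of_mem hz1
      have h3 : D1.card ≤ (A \ B).card := Finset.card_le_card (by
        intro h hh; simpa using s1 h hh)
      have h4 := Finset.card_sdiff_comm hcard
      omega
    obtain ⟨g, hg, hgn⟩ := Finset.exists_mem_notMem_of_card_lt_card hlt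
    have hg' := Finset.mem_sdiff.1 hg
    have hgn' : ∀ h ∈ D1, h ≠ z → f h ≠ g := by
      intro h hh hne he
      exact hgn (Finset.mem_image.2 ⟨h, Finset.mem_erase.2 ⟨hne, hh⟩, he⟩)
    have hWg := hq g hg'.1 hg'.2
    refine ⟨Function.update f z g, s21, s1, ?_, ?_, ?_, ?_, ainj⟩
    · intro h hh
      by_cases e : h = z
      · subst e; simpa using hg'
      · rw [Function.update_of_ne e]
        exact fm h hh (fun h' => e (inj h hh z hz1 (h'.trans hzq.symm)))
    · intro h hh h' hh'
      by_cases e : h = z <;> by_cases e' : h' = z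
      · intro _; rw [e, e']
      · subst e; rw [Function.update_self, Function.update_of_ne e']
        intro h2; exact absurd h2.symm (hgn' h' hh' e')
      · subst e'; rw [Function.update_self, Function.update_of_ne e]
        intro h2; exact absurd h2 (hgn' h hh e)
      · rw [Function.update_of_ne e, Function.update_of_ne e']; exact inj h hh h' hh'
    · intro h hh
      by_cases e : h = z
      · subst e; rw [Function.update_self]
        have := good h hh; rw [hzq] at this; omega
      · rw [Function.update_of_ne e]; exact good h hh
    · intro h hh
      by_cases e : h = z
      · subst e; rw [Function.update_self]
        have := anc h hh; rw [hzq] at this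
        exact ⟨this.1, this.2.1, this.2.2.1, hWg.trans this.2.2.2⟩
      · rw [Function.update_of_ne e]; exact anc h hh
  · push Not at hz
    exact ⟨f, s21, s1, fun h hh => fm h hh (hz h hh), inj, good, anc, ainj⟩

/-- Both hit, or both insert into equal caches: the matching is unchanged. -/
lemma step_same (A B : Finset S) (W W' : S → ℕ) (om nu : ℕ → ℕ) (T t : ℕ)
    (D1 D2 : Finset S) (f : S → S) (a : S → ℕ) (s : S)
    (hW : ∀ h, h ≠ s → W' h = W h) (hs : s ∈ A ↔ s ∈ B)
    (hc : Core A B W om nu T t D1 D2 f a) :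
    Core A B W' om nu T (t + 1) D1 D2 f a := by
  obtain ⟨s21, s1, fm, inj, good, anc, ainj⟩ := hc
  have e1 : ∀ h ∈ D1, h ≠ s := fun h hh e => by have := s1 h hh; subst e; tauto
  have e2 : ∀ h ∈ D1, f h ≠ s := fun h hh e => by have := fm h hh; rw [e] at this; tauto
  refine ⟨s21, s1, fm, inj, ?_, ?_, ainj⟩
  · intro h hh; rw [hW _ (e1 h hh), hW _ (e2 h hh)]; exact good h hh
  · intro h hh; rw [hW _ (e2 h (s21 h hh))]
    have := anc h hh
    exact ⟨this.1, this.2.1, by omega, this.2.2.2⟩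

/-- `A` misses, `B` hits. -/
lemma step_c (A B : Finset S) (W W' : S → ℕ) (om nu : ℕ → ℕ) (T t : ℕ)
    (D1 D2 : Finset S) (f : S → S) (a : S → ℕ) (s x : S)
    (hW : ∀ h, h ≠ s → W' h = W h) (hsA : s ∉ A) (hsB : s ∈ B)
    (hc : Core A B W om nu T t D1 D2 f a) :
    ∃ D1' D2' f' a', Core (insert s (A.erase x)) B W' om nu T (t + 1) D1' D2' f' a' ∧
      (∀ h ∈ D2', h ∈ D2 ∧ h ≠ s) ∧
      2 * (insert s (A.erase x) \ B).card + D1.card + D2.card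
        ≤ 2 * (A \ B).card + D1'.card + D2'.card + 2 := by
  obtain ⟨s21, s1, fm, inj, good, anc, ainj⟩ := hc
  have e1 : ∀ h ∈ D1, h ≠ s := fun h hh e => by have := s1 h hh; subst e; tauto
  have hH : (insert s (A.erase x) \ B) = (A \ B).erase x := by
    ext h; simp only [Finset.mem_sdiff, Finset.mem_insert, Finset.mem_erase]
    constructor
    · rintro ⟨h1 | h1, h2⟩
      · subst h1; exact absurd hsB h2
      · tauto
    · tauto
  -- the partner of `s`
  have key : ∃ z : S, ∀ h ∈ D1, f h = s → h = z := by
    by_cases hz : ∃ z ∈ D1, f z = s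
    · obtain ⟨z, hz, hzs⟩ := hz
      exact ⟨z, fun h hh e => inj h hh z hz (e.trans hzs.symm)⟩
    · push Not at hz
      exact ⟨s, fun h hh e => absurd e (hz h hh)⟩
  obtain ⟨z, hz⟩ := key
  refine ⟨(D1.erase x).erase z, (D2.erase x).erase z, f, a, ⟨?_, ?_, ?_, ?_, ?_, ?_, ?_⟩, ?_, ?_⟩
  · intro h; simp only [Finset.mem_erase]; have := s21 h; tauto
  · intro h; simp only [Finset.mem_erase, Finset.mem_insert]; have := s1 h; tauto
  · intro h; simp only [Finset.mem_erase, Finset.mem_insert]; have := fm h; have := hz h; tauto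
  · intro h hh h' hh'
    simp only [Finset.mem_erase] at hh hh'
    exact inj h hh.2.2 h' hh'.2.2
  · intro h hh
    simp only [Finset.mem_erase] at hh
    rw [hW _ (e1 h hh.2.2), hW _ (fun e => hh.1 (hz h hh.2.2 e))]
    exact good h hh.2.2
  · intro h hh
    simp only [Finset.mem_erase] at hh
    rw [hW _ (fun e => hh.1 (hz h (s21 h hh.2.2) e))]
    have := anc h hh.2.2
    exact ⟨this.1, this.2.1, by omega, this.2.2.2⟩
  · intro h hh h' hh'
    simp only [Finset.mem_erase] at hh hh'
    exact ainj h hh.2.2 h' hh'.2.2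
  · intro h hh
    simp only [Finset.mem_erase] at hh
    exact ⟨hh.2.2, e1 h (s21 h hh.2.2)⟩
  · rw [hH]
    have c1 := Finset.pred_card_le_card_erase (s := D1.erase x) (a := z)
    have c2 := Finset.pred_card_le_card_erase (s := D2.erase x) (a := z)
    by_cases hx : x ∈ A \ B
    · have := Finset.card_erase_add_one hx
      have c3 := Finset.pred_card_le_card_erase (s := D1) (a := x)
      have c4 := Finset.pred_card_le_card_erase (s := D2) (a := x)
      omega
    · have hx1 : x ∉ D1 := fun h => hx (by simpa using s1 x h)
      have hx2 : x ∉ D2 := fun h => hx1 (s21 x h)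
      rw [Finset.erase_eq_of_notMem hx] 
      rw [Finset.erase_eq_of_notMem hx1] at *
      rw [Finset.erase_eq_of_notMem hx2] at *
      omega

set_option maxHeartbeats 2000000 in
/-- Both miss with full caches. -/
lemma step_d (A B : Finset S) (W W' : S → ℕ) (om nu : ℕ → ℕ) (T t : ℕ)
    (D1 D2 : Finset S) (f : S → S) (a : S → ℕ) (s x q : S)
    (hW : ∀ h, h ≠ s → W' h = W h) (hsA : s ∉ A) (hsB : s ∉ B) (hx : x ∈ A) (hq : q ∈ B)
    (hcard : A.card = B.card) (hmax : ∀ g ∈ B, W g ≤ W q)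
    (hc : Core A B W om nu T t D1 D2 f a) :
    ∃ D1' D2' f' a', Core (insert s (A.erase x)) (insert s (B.erase q)) W' om nu T (t + 1)
        D1' D2' f' a' ∧
      (∀ h ∈ D2', h ∈ D2 ∧ h ≠ s) ∧
      2 * (insert s (A.erase x) \ insert s (B.erase q)).card + D1.card + D2.card
        ≤ 2 * (A \ B).card + D1'.card + D2'.card + 1 := by
  obtain ⟨s21, s1, fm, inj, good, anc, ainj⟩ := hc
  have e1 : ∀ h ∈ D1, h ≠ s := fun h hh e => by have := s1 h hh; subst e; tauto
  have e2 : ∀ h ∈ D1, f h ≠ s := fun h hh e => by have := fm h hh; rw [e] at this; tauto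
  have hqs : q ≠ s := fun e => hsB (e ▸ hq)
  have hqD1 : q ∉ D1 := fun h => (s1 q h).2 hq
  have hqD2 : q ∉ D2 := fun h => hqD1 (s21 q h)
  have hcard' : (insert s (A.erase x)).card = (insert s (B.erase q)).card := by
    rw [Finset.card_insert_of_notMem (by simp [hsA]), Finset.card_insert_of_notMem (by simp [hsB]),
      Finset.card_erase_of_mem hx, Finset.card_erase_of_mem hq, hcard]
  have hmax' : ∀ g ∈ insert s (B.erase q), g ∉ insert s (A.erase x) → W' g ≤ W' q := by
    intro g hg hgA
    have hgs : g ≠ s := by rintro rfl; simp at hgA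
    rw [hW _ hgs, hW _ hqs]
    simp only [Finset.mem_insert, Finset.mem_erase] at hg
    exact hmax g (by tauto)
  have ce1 := Finset.pred_card_le_card_erase (s := D1) (a := x)
  have ce2 := Finset.pred_card_le_card_erase (s := D2) (a := x)
  have hxx : x ∉ A \ B → x ∉ D1 ∧ x ∉ D2 := fun hx =>
    have hx1 : x ∉ D1 := fun h => hx (by simpa using s1 x h)
    ⟨hx1, fun h => hx1 (s21 x h)⟩
  have hxc : 2 * ((A \ B).erase x).card + D1.card + D2.card
      ≤ 2 * (A \ B).card + (D1.erase x).card + (D2.erase x).card := by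
    by_cases hx' : x ∈ A \ B
    · have := Finset.card_erase_add_one hx'
      omega
    · rw [Finset.erase_eq_of_notMem hx', Finset.erase_eq_of_notMem (hxx hx').1,
        Finset.erase_eq_of_notMem (hxx hx').2]
  by_cases hqA : q ∈ A ∧ q ≠ x
  · have hqf : ∀ h ∈ D1, f h ≠ q := fun h hh e => (fm h hh).2 (e ▸ hqA.1)
    have hH : insert s (A.erase x) \ insert s (B.erase q) = insert q ((A \ B).erase x) := by
      ext h; simp only [Finset.mem_sdiff, Finset.mem_insert, Finset.mem_erase]
      by_cases h1 : h = q
      · subst h1; tauto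
      · by_cases h2 : h = s
        · subst h2; tauto
        · tauto
    obtain ⟨f', hf'⟩ := reroute (insert s (A.erase x)) (insert s (B.erase q)) W' om nu T (t + 1)
      (insert q (D1.erase x)) (D2.erase x) (Function.update f q q) a q hcard'
      (by intro h; simp only [Finset.mem_erase, Finset.mem_insert]; have := s21 h; tauto)
      (by
        intro h hh
        simp only [Finset.mem_erase, Finset.mem_insert] at hh ⊢
        rcases hh with rfl | hh
        · tauto
        · have := s1 h hh.2; have := e1 h hh.2; tauto)
      (by
        intro h hh hne
        simp only [Finset.mem_erase, Finset.mem_insert] at hh ⊢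
        rcases hh with rfl | hh
        · simp at hne
        · have hhq : h ≠ q := fun e => hqD1 (e ▸ hh.2)
          rw [Function.update_of_ne hhq] at hne ⊢
          have := fm h hh.2; have := e2 h hh.2; tauto)
      (by
        intro h hh h' hh' he
        simp only [Finset.mem_erase, Finset.mem_insert] at hh hh'
        rcases hh with rfl | hh <;> rcases hh' with rfl | hh'
        · rfl
        · have hhq : h' ≠ h := fun e => hqD1 (e ▸ hh'.2)
          rw [Function.update_self, Function.update_of_ne hhq] at he
          exact absurd he.symm (hqf h' hh'.2)
        · have hhq : h ≠ h' := fun e => hqD1 (e ▸ hh.2)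
          rw [Function.update_self, Function.update_of_ne hhq] at he
          exact absurd he (hqf h hh.2)
        · have hhq : h ≠ q := fun e => hqD1 (e ▸ hh.2)
          have hhq' : h' ≠ q := fun e => hqD1 (e ▸ hh'.2)
          rw [Function.update_of_ne hhq, Function.update_of_ne hhq'] at he
          exact inj h hh.2 h' hh'.2 he)
      (by
        intro h hh
        simp only [Finset.mem_erase, Finset.mem_insert] at hh
        rcases hh with rfl | hh
        · simp
        · have hhq : h ≠ q := fun e => hqD1 (e ▸ hh.2)
          rw [Function.update_of_ne hhq, hW _ (e1 h hh.2), hW _ (e2 h hh.2)]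
          exact good h hh.2)
      (by
        intro h hh
        simp only [Finset.mem_erase] at hh
        have hhq : h ≠ q := fun e => hqD2 (e ▸ hh.2)
        rw [Function.update_of_ne hhq, hW _ (e2 h (s21 h hh.2))]
        have := anc h hh.2
        exact ⟨this.1, this.2.1, by omega, this.2.2.2⟩)
      (by
        intro h hh h' hh'
        simp only [Finset.mem_erase] at hh hh'
        exact ainj h hh.2 h' hh'.2)
      hmax'
    refine ⟨_, _, f', a, hf', ?_, ?_⟩
    · intro h hh
      simp only [Finset.mem_erase] at hh
      exact ⟨hh.2, e1 h (s21 h hh.2)⟩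
    · rw [hH, Finset.card_insert_of_notMem (by simp [hq]),
        Finset.card_insert_of_notMem (by simp [hqD1])]
      omega
  · have hH : insert s (A.erase x) \ insert s (B.erase q) = (A \ B).erase x := by
      ext h; simp only [Finset.mem_sdiff, Finset.mem_insert, Finset.mem_erase]
      by_cases h1 : h = q
      · subst h1; tauto
      · by_cases h2 : h = s
        · subst h2; tauto
        · tauto
    obtain ⟨f', hf'⟩ := reroute (insert s (A.erase x)) (insert s (B.erase q)) W' om nu T (t + 1)
      (D1.erase x) (D2.erase x) f a q hcard'
      (by intro h; simp only [Finset.mem_erase]; have := s21 h; tauto)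
      (by
        intro h hh
        simp only [Finset.mem_erase, Finset.mem_insert] at hh ⊢
        have := s1 h hh.2; have := e1 h hh.2; tauto)
      (by
        intro h hh hne
        simp only [Finset.mem_erase, Finset.mem_insert] at hh ⊢
        have := fm h hh.2; have := e2 h hh.2; tauto)
      (by
        intro h hh h' hh' he
        simp only [Finset.mem_erase] at hh hh'
        exact inj h hh.2 h' hh'.2 he)
      (by
        intro h hh
        simp only [Finset.mem_erase] at hh
        rw [hW _ (e1 h hh.2), hW _ (e2 h hh.2)]
        exact good h hh.2)
      (by
        intro h hh
        simp only [Finset.mem_erase] at hh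
        rw [hW _ (e2 h (s21 h hh.2))]
        have := anc h hh.2
        exact ⟨this.1, this.2.1, by omega, this.2.2.2⟩)
      (by
        intro h hh h' hh'
        simp only [Finset.mem_erase] at hh hh'
        exact ainj h hh.2 h' hh'.2)
      hmax'
    refine ⟨_, _, f', a, hf', ?_, ?_⟩
    · intro h hh
      simp only [Finset.mem_erase] at hh
      exact ⟨hh.2, e1 h (s21 h hh.2)⟩
    · rw [hH]
      omega

set_option maxHeartbeats 2000000 in
/-- `A` hits, `B` misses and evicts `q`. The index `i` is the last request of `s`. -/
lemma step_b (A B : Finset S) (W W' : S → ℕ) (om nu : ℕ → ℕ) (T t : ℕ)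
    (D1 D2 : Finset S) (f : S → S) (a : S → ℕ) (s q : S) (i : ℕ)
    (hW : ∀ h, h ≠ s → W' h = W h) (hsA : s ∈ A) (hsB : s ∉ B) (hq : q ∈ B)
    (hcard : A.card = B.card) (hmax : ∀ g ∈ B, W g ≤ W q)
    (hi1 : 1 ≤ i) (hiT : i ≤ T) (hnu : nu i = t + 1) (hom : om i = W s)
    (hc : Core A B W om nu T t D1 D2 f a) :
    ∃ D1' D2' f' a', Core A (insert s (B.erase q)) W' om nu T (t + 1)
        D1' D2' f' a' ∧
      (∀ h ∈ D2', (h ∈ D2 ∧ h ≠ s) ∨ h = q) ∧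
      1 + 2 * (A \ insert s (B.erase q)).card + D1.card + D2.card
        ≤ 2 * (A \ B).card + D1'.card + D2'.card + (if s ∈ D2 then 1 else 0) := by
  obtain ⟨s21, s1, fm, inj, good, anc, ainj⟩ := hc
  have e2 : ∀ h ∈ D1, f h ≠ s := fun h hh e => by have := fm h hh; rw [e] at this; tauto
  have hqs : q ≠ s := fun e => hsB (e ▸ hq)
  have hqD1 : q ∉ D1 := fun h => (s1 q h).2 hq
  have hqD2 : q ∉ D2 := fun h => hqD1 (s21 q h)
  have hcard' : A.card = (insert s (B.erase q)).card := by
    rw [Finset.card_insert_of_notMem (by simp [hsB]), Finset.card_erase_of_mem hq, hcard]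
    have := Finset.card_pos.2 ⟨q, hq⟩
    omega
  have hmax' : ∀ g ∈ insert s (B.erase q), g ∉ A → W' g ≤ W' q := by
    intro g hg hgA
    have hgs : g ≠ s := by rintro rfl; exact hgA hsA
    rw [hW _ hgs, hW _ hqs]
    simp only [Finset.mem_insert, Finset.mem_erase] at hg
    exact hmax g (by tauto)
  have hsH : s ∈ A \ B := by simp [hsA, hsB]
  have hsc := Finset.card_erase_add_one hsH
  have ca1 : s ∈ D1 → (D1.erase s).card + 1 = D1.card := Finset.card_erase_add_one
  have ca2 : s ∈ D2 → (D2.erase s).card + 1 = D2.card := Finset.card_erase_add_one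
  have cb1 : s ∉ D1 → (D1.erase s).card = D1.card := fun h => by
    rw [Finset.erase_eq_of_notMem h]
  have cb2 : s ∉ D2 → (D2.erase s).card = D2.card := fun h => by
    rw [Finset.erase_eq_of_notMem h]
  by_cases hqA : q ∈ A
  · have hqf : ∀ h ∈ D1, f h ≠ q := fun h hh e => (fm h hh).2 (e ▸ hqA)
    have hH : A \ insert s (B.erase q) = insert q ((A \ B).erase s) := by
      ext h; simp only [Finset.mem_sdiff, Finset.mem_insert, Finset.mem_erase]
      by_cases h1 : h = q
      · subst h1; tauto
      · by_cases h2 : h = s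
        · subst h2; tauto
        · tauto
    have hHc : (A \ insert s (B.erase q)).card = (A \ B).card := by
      rw [hH, Finset.card_insert_of_notMem (by simp [hq])]; exact hsc
    by_cases hsD : s ∈ D1
    · refine ⟨insert q (D1.erase s), insert q (D2.erase s), Function.update f q (f s),
        Function.update a q i, ⟨?_, ?_, ?_, ?_, ?_, ?_, ?_⟩, ?_, ?_⟩
      · intro h; simp only [Finset.mem_erase, Finset.mem_insert]; have := s21 h; tauto
      · intro h hh
        simp only [Finset.mem_erase, Finset.mem_insert] at hh ⊢
        rcases hh with rfl | hh
        · tauto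
        · have := s1 h hh.2; tauto
      · intro h hh
        simp only [Finset.mem_erase, Finset.mem_insert] at hh ⊢
        rcases hh with rfl | hh
        · rw [Function.update_self]
          have := fm s hsD; have := hqf s hsD; tauto
        · have hhq : h ≠ q := fun e => hqD1 (e ▸ hh.2)
          rw [Function.update_of_ne hhq]
          have := fm h hh.2; have := hqf h hh.2; tauto
      · intro h hh h' hh' he
        simp only [Finset.mem_erase, Finset.mem_insert] at hh hh'
        rcases hh with rfl | hh <;> rcases hh' with rfl | hh'
        · rfl
        · have hhq : h' ≠ h := fun e => hqD1 (e ▸ hh'.2)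
          rw [Function.update_self, Function.update_of_ne hhq] at he
          exact absurd (inj s hsD h' hh'.2 he).symm hh'.1
        · have hhq : h ≠ h' := fun e => hqD1 (e ▸ hh.2)
          rw [Function.update_self, Function.update_of_ne hhq] at he
          exact absurd (inj h hh.2 s hsD he) hh.1
        · have hhq : h ≠ q := fun e => hqD1 (e ▸ hh.2)
          have hhq' : h' ≠ q := fun e => hqD1 (e ▸ hh'.2)
          rw [Function.update_of_ne hhq, Function.update_of_ne hhq'] at he
          exact inj h hh.2 h' hh'.2 he
      · intro h hh
        simp only [Finset.mem_erase, Finset.mem_insert] at hh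
        rcases hh with rfl | hh
        · rw [Function.update_self, hW _ (e2 s hsD), hW _ hqs]
          exact hmax _ (fm s hsD).1
        · have hhq : h ≠ q := fun e => hqD1 (e ▸ hh.2)
          rw [Function.update_of_ne hhq, hW _ hh.1, hW _ (e2 h hh.2)]
          exact good h hh.2
      · intro h hh
        simp only [Finset.mem_erase, Finset.mem_insert] at hh
        rcases hh with rfl | hh
        · rw [Function.update_self, Function.update_self, hW _ (e2 s hsD), hom]
          exact ⟨hi1, hiT, hnu.le, good s hsD⟩
        · have hhq : h ≠ q := fun e => hqD2 (e ▸ hh.2)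
          rw [Function.update_of_ne hhq, Function.update_of_ne hhq, hW _ (e2 h (s21 h hh.2))]
          have := anc h hh.2
          exact ⟨this.1, this.2.1, by omega, this.2.2.2⟩
      · intro h hh h' hh' he
        simp only [Finset.mem_erase, Finset.mem_insert] at hh hh'
        rcases hh with rfl | hh <;> rcases hh' with rfl | hh'
        · rfl
        · have hhq : h' ≠ h := fun e => hqD2 (e ▸ hh'.2)
          rw [Function.update_self, Function.update_of_ne hhq] at he
          have := (anc h' hh'.2).2.2.1
          rw [← he] at this; omega
        · have hhq : h ≠ h' := fun e => hqD2 (e ▸ hh.2)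
          rw [Function.update_self, Function.update_of_ne hhq] at he
          have := (anc h hh.2).2.2.1
          rw [he] at this; omega
        · have hhq : h ≠ q := fun e => hqD2 (e ▸ hh.2)
          have hhq' : h' ≠ q := fun e => hqD2 (e ▸ hh'.2)
          rw [Function.update_of_ne hhq, Function.update_of_ne hhq'] at he
          exact ainj h hh.2 h' hh'.2 he
      · intro h hh
        simp only [Finset.mem_erase, Finset.mem_insert] at hh
        tauto
      · rw [hHc, Finset.card_insert_of_notMem (by simp [hqD1]),
          Finset.card_insert_of_notMem (by simp [hqD2])]
        have := ca1 hsD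
        split_ifs with h2
        · have := ca2 h2; omega
        · have := cb2 h2; omega
    · have hsD2 : s ∉ D2 := fun h => hsD (s21 s h)
      have e1 : ∀ h ∈ D1, h ≠ s := fun h hh e => hsD (e ▸ hh)
      obtain ⟨f', hf'⟩ := reroute A (insert s (B.erase q)) W' om nu T (t + 1)
        (insert q D1) D2 (Function.update f q q) a q hcard'
        (by intro h; simp only [Finset.mem_insert]; have := s21 h; tauto)
        (by
          intro h hh
          simp only [Finset.mem_erase, Finset.mem_insert] at hh ⊢
          rcases hh with rfl | hh
          · tauto
          · have := s1 h hh; have := e1 h hh; tauto)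
        (by
          intro h hh hne
          simp only [Finset.mem_erase, Finset.mem_insert] at hh ⊢
          rcases hh with rfl | hh
          · simp at hne
          · have hhq : h ≠ q := fun e => hqD1 (e ▸ hh)
            rw [Function.update_of_ne hhq] at hne ⊢
            have := fm h hh; have := e2 h hh; tauto)
        (by
          intro h hh h' hh' he
          simp only [Finset.mem_insert] at hh hh'
          rcases hh with rfl | hh <;> rcases hh' with rfl | hh'
          · rfl
          · have hhq : h' ≠ h := fun e => hqD1 (e ▸ hh')
            rw [Function.update_self, Function.update_of_ne hhq] at he
            exact absurd he.symm (hqf h' hh')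
          · have hhq : h ≠ h' := fun e => hqD1 (e ▸ hh)
            rw [Function.update_self, Function.update_of_ne hhq] at he
            exact absurd he (hqf h hh)
          · have hhq : h ≠ q := fun e => hqD1 (e ▸ hh)
            have hhq' : h' ≠ q := fun e => hqD1 (e ▸ hh')
            rw [Function.update_of_ne hhq, Function.update_of_ne hhq'] at he
            exact inj h hh h' hh' he)
        (by
          intro h hh
          simp only [Finset.mem_insert] at hh
          rcases hh with rfl | hh
          · simp
          · have hhq : h ≠ q := fun e => hqD1 (e ▸ hh)
            rw [Function.update_of_ne hhq, hW _ (e1 h hh), hW _ (e2 h hh)]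
            exact good h hh)
        (by
          intro h hh
          have hhq : h ≠ q := fun e => hqD2 (e ▸ hh)
          rw [Function.update_of_ne hhq, hW _ (e2 h (s21 h hh))]
          have := anc h hh
          exact ⟨this.1, this.2.1, by omega, this.2.2.2⟩)
        ainj hmax'
      refine ⟨_, _, f', a, hf', ?_, ?_⟩
      · intro h hh
        exact Or.inl ⟨hh, e1 h (s21 h hh)⟩
      · rw [hHc, Finset.card_insert_of_notMem hqD1]
        omega
  · have hH : A \ insert s (B.erase q) = (A \ B).erase s := by
      ext h; simp only [Finset.mem_sdiff, Finset.mem_insert, Finset.mem_erase]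
      by_cases h1 : h = q
      · subst h1; tauto
      · by_cases h2 : h = s
        · subst h2; tauto
        · tauto
    obtain ⟨f', hf'⟩ := reroute A (insert s (B.erase q)) W' om nu T (t + 1)
      (D1.erase s) (D2.erase s) f a q hcard'
      (by intro h; simp only [Finset.mem_erase]; have := s21 h; tauto)
      (by
        intro h hh
        simp only [Finset.mem_erase, Finset.mem_insert] at hh ⊢
        have := s1 h hh.2; tauto)
      (by
        intro h hh hne
        simp only [Finset.mem_erase, Finset.mem_insert] at hh ⊢
        have := fm h hh.2; have := e2 h hh.2; tauto)
      (by
        intro h hh h' hh' he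
        simp only [Finset.mem_erase] at hh hh'
        exact inj h hh.2 h' hh'.2 he)
      (by
        intro h hh
        simp only [Finset.mem_erase] at hh
        rw [hW _ hh.1, hW _ (e2 h hh.2)]
        exact good h hh.2)
      (by
        intro h hh
        simp only [Finset.mem_erase] at hh
        rw [hW _ (e2 h (s21 h hh.2))]
        have := anc h hh.2
        exact ⟨this.1, this.2.1, by omega, this.2.2.2⟩)
      (by
        intro h hh h' hh'
        simp only [Finset.mem_erase] at hh hh'
        exact ainj h hh.2 h' hh'.2)
      hmax'
    refine ⟨_, _, f', a, hf', ?_, ?_⟩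
    · intro h hh
      simp only [Finset.mem_erase] at hh
      exact Or.inl ⟨hh.2, hh.1⟩
    · rw [hH]
      split_ifs with h2
      · have := ca2 h2; have := ca1 (s21 s h2); omega
      · have := cb2 h2
        by_cases h1 : s ∈ D1
        · have := ca1 h1; omega
        · have := cb1 h1; omega

section
variable {k T : ℕ} {σ : ℕ → S}

lemma slot (A B : CacheRun S k T σ) (ω : ℕ → ℕ) (t : ℕ) (ht : t ≤ T)
    (D1 D2 : Finset S) (f : S → S) (a : S → ℕ)
    (hc : Core (A.C t) (B.C t) (fun s => ω (lst σ s t)) ω (nextReq σ T) T t D1 D2 f a) :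
    D2.card ≤ wrongAt σ T ω t := by
  have hl : ∀ h ∈ D2, 1 ≤ lst σ (f h) t ∧ lst σ (f h) t ≤ t ∧ σ (lst σ (f h) t) = f h ∧
      t < nextReq σ T (lst σ (f h) t) := by
    intro h hh
    obtain ⟨h1, h2, h3, h4⟩ := lst_spec σ (f h) t
      (C_requested B t ht _ (hc.fm h (hc.s21 h hh)).1)
    exact ⟨h1, h2, h3, nextReq_gt σ T _ _ h2 ht (fun j h5 h6 => by rw [h3]; exact h4 j h5 h6)⟩
  unfold wrongAt
  apply Finset.card_le_card_of_injOn (fun h => if t < ω (a h) then a h else lst σ (f h) t)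
  · intro h hh
    have hh : h ∈ D2 := hh
    have h1 := hc.anc h hh
    have h2 := hl h hh
    simp only [Finset.coe_filter, Set.mem_setOf_eq, Finset.mem_Icc]
    split_ifs with h3
    · exact ⟨⟨h1.1, h1.2.1⟩, Or.inr ⟨h1.2.2.1, h3⟩⟩
    · exact ⟨⟨h2.1, by omega⟩, Or.inl ⟨by have := h1.2.2.2; omega, h2.2.2.2⟩⟩
  · intro h hh h' hh' he
    have hh : h ∈ D2 := hh
    have hh' : h' ∈ D2 := hh'
    have h1 := hc.anc h hh
    have h2 := hl h hh
    have h1' := hc.anc h' hh'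
    have h2' := hl h' hh'
    simp only at he
    split_ifs at he with h3 h4 h4
    · exact hc.ainj h hh h' hh' he
    · rw [← he] at h2'; omega
    · rw [he] at h2; omega
    · apply hc.inj h (hc.s21 h hh) h' (hc.s21 h' hh')
      rw [← h2.2.2.1, ← h2'.2.2.1, he]

/-- The full invariant. -/
def Inv (A B : CacheRun S k T σ) (ω : ℕ → ℕ) (t : ℕ) (D1 D2 : Finset S) (f : S → S)
    (a : S → ℕ) (J : Finset ℕ) : Prop :=
  Core (A.C t) (B.C t) (fun s => ω (lst σ s t)) ω (nextReq σ T) T t D1 D2 f a ∧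
  (∀ m ∈ J, 1 ≤ m ∧ m ≤ t ∧ σ m ∉ B.C (m - 1) ∧ σ m ∈ A.C (m - 1)) ∧
  missUp B t + 2 * (A.C t \ B.C t).card ≤ 2 * missUp A t + D1.card + D2.card + J.card ∧
  ∑ m ∈ J, (m - evt B (σ m) (m - 1)) + ∑ h ∈ D2, (t + 1 - evt B h t)
    ≤ ∑ τ ∈ Finset.Icc 1 t, wrongAt σ T ω τ

lemma inv_finish (A B : CacheRun S k T σ) (ω : ℕ → ℕ) (t : ℕ) (ht : t < T)
    (D1 D2 : Finset S) (f : S → S) (a : S → ℕ) (J : Finset ℕ)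
    (hI : Inv A B ω t D1 D2 f a J)
    (D1' D2' : Finset S) (f' : S → S) (a' : S → ℕ)
    (hc : Core (A.C (t + 1)) (B.C (t + 1)) (fun s => ω (lst σ s (t + 1))) ω (nextReq σ T) T
      (t + 1) D1' D2' f' a')
    (hD : ∀ h ∈ D2', (h ∈ D2 ∧ h ≠ σ (t + 1)) ∨ evt B h (t + 1) = t + 1)
    (hcount : (if σ (t + 1) ∈ B.C t then 0 else 1) + 2 * (A.C (t + 1) \ B.C (t + 1)).card
      + D1.card + D2.card ≤ 2 * (A.C t \ B.C t).card + D1'.card + D2'.card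
      + 2 * (if σ (t + 1) ∈ A.C t then 0 else 1) + (if σ (t + 1) ∈ D2 then 1 else 0)) :
    ∃ D1 D2 f a J, Inv A B ω (t + 1) D1 D2 f a J := by
  obtain ⟨hcore, hJ, hmis, hsum⟩ := hI
  have hslot := slot A B ω (t + 1) (by omega) D1' D2' f' a' hc
  have htJ : t + 1 ∉ J := fun h => by have := (hJ _ h).2.1; omega
  -- sum over `D2'`
  have b1 : ∑ h ∈ D2', (t + 1 + 1 - evt B h (t + 1)) ≤
      ∑ h ∈ D2', (t + 1 - evt B h (t + 1)) + D2'.card := by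
    rw [Finset.card_eq_sum_ones, ← Finset.sum_add_distrib]
    apply Finset.sum_le_sum
    intro h _
    omega
  have b2 : ∑ h ∈ D2', (t + 1 - evt B h (t + 1)) ≤
      ∑ h ∈ D2.erase (σ (t + 1)), (t + 1 - evt B h t) := by
    rw [← Finset.sum_filter_ne_zero]
    refine le_trans (Finset.sum_le_sum_of_subset (t := D2.erase (σ (t + 1))) ?_)
      (Finset.sum_le_sum ?_)
    · intro h hh
      rw [Finset.mem_filter] at hh
      rw [Finset.mem_erase]
      rcases hD h hh.1 with h1 | h1
      · exact ⟨h1.2, h1.1⟩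
      · exfalso; apply hh.2; omega
    · intro h _
      have := evt_mono B h t
      omega
  have b3 : ∑ τ ∈ Finset.Icc 1 (t + 1), wrongAt σ T ω τ =
      ∑ τ ∈ Finset.Icc 1 t, wrongAt σ T ω τ + wrongAt σ T ω (t + 1) :=
    Finset.sum_Icc_succ_top (by omega) _
  have mA := missUp_succ A t
  have mB := missUp_succ B t
  by_cases hs : σ (t + 1) ∈ D2
  · refine ⟨D1', D2', f', a', insert (t + 1) J, hc, ?_, ?_, ?_⟩
    · intro m hm
      rcases Finset.mem_insert.1 hm with rfl | hm
      · have := hcore.s1 _ (hcore.s21 _ hs)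
        exact ⟨by omega, le_rfl, by simpa using this.2, by simpa using this.1⟩
      · have := hJ m hm
        exact ⟨this.1, by omega, this.2.2⟩
    · rw [if_pos hs] at hcount
      rw [Finset.card_insert_of_notMem htJ]
      omega
    · rw [Finset.sum_insert htJ, b3]
      have := Finset.sum_erase_add D2 (fun h => t + 1 - evt B h t) hs
      simp only [Nat.add_sub_cancel] at this ⊢
      omega
  · refine ⟨D1', D2', f', a', J, hc, ?_, ?_, ?_⟩
    · intro m hm
      have := hJ m hm
      exact ⟨this.1, by omega, this.2.2⟩
    · rw [if_neg hs] at hcount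
      omega
    · rw [b3]
      rw [Finset.erase_eq_of_notMem hs] at b2
      omega

lemma inv_exists (A B : CacheRun S k T σ) (ω : ℕ → ℕ) (hB : IsBlindOracle B ω) (t : ℕ)
    (ht : t ≤ T) : ∃ D1 D2 f a J, Inv A B ω t D1 D2 f a J := by
  induction t with
  | zero =>
    refine ⟨∅, ∅, id, fun _ => 0, ∅, ⟨?_, ?_, ?_, ?_, ?_, ?_, ?_⟩, ?_, ?_, ?_⟩ <;>
      simp [A.init, B.init, missUp]
  | succ t ih =>
    obtain ⟨D1, D2, f, a, J, hI⟩ := ih (by omega)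
    have hcore := hI.1
    have hW : ∀ h, h ≠ σ (t + 1) →
        (fun s => ω (lst σ s (t + 1))) h = (fun s => ω (lst σ s t)) h := by
      intro h hh
      simp only
      rw [lst_succ_ne σ h t hh.symm]
    have hfull := same_or_full A B t (by omega)
    have hcard : (A.C t).card = (B.C t).card := by
      rcases hfull with h | h
      · rw [h]
      · omega
    have hs2 : σ (t + 1) ∈ D2 → σ (t + 1) ∈ A.C t ∧ σ (t + 1) ∉ B.C t :=
      fun h => hcore.s1 _ (hcore.s21 _ h)
    rcases C_cases A t (by omega) with a1 | a1 | a1 <;>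
      rcases C_cases B t (by omega) with b1 | b1 | b1
    · -- both hit
      have hc := step_same _ _ _ _ _ _ _ _ _ _ _ _ (σ (t + 1)) hW
        (by simp [a1.1, b1.1]) hcore
      refine inv_finish A B ω t (by omega) D1 D2 f a J hI D1 D2 f a
        (by rw [a1.2, b1.2]; exact hc) ?_ ?_
      · intro h hh
        left
        refine ⟨hh, ?_⟩
        rintro rfl
        exact (hs2 hh).2 b1.1
      · rw [a1.2, b1.2, if_pos b1.1, if_pos a1.1]
        omega
    · exfalso
      rcases hfull with h | h
      · rw [h] at a1; exact b1.1 a1.1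
      · omega
    · -- A hits, B evicts
      have hreq := lst_spec σ (σ (t + 1)) t (C_requested A t (by omega) _ a1.1)
      have hmax : ∀ g ∈ B.C t, ω (lst σ g t) ≤ ω (lst σ (B.p (t + 1)) t) := by
        intro g hg
        exact blind_max B ω hB (t + 1) b1.2.2.1 g hg
      obtain ⟨D1', D2', f', a', hc, hD, hcount⟩ :=
        step_b (A.C t) (B.C t) (fun s => ω (lst σ s t)) (fun s => ω (lst σ s (t + 1))) ω
          (nextReq σ T) T t D1 D2 f a (σ (t + 1)) (B.p (t + 1)) (lst σ (σ (t + 1)) t) hW a1.1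
          b1.1 b1.2.2.2.1 hcard hmax hreq.1 (by have := hreq.2.1; omega)
          (nextReq_eq σ T _ _ (by have := hreq.2.1; omega) ht hreq.2.2.1.symm
            (fun j h1 h2 => by rw [hreq.2.2.1]; exact hreq.2.2.2 j h1 (by omega)))
          rfl hcore
      refine inv_finish A B ω t (by omega) D1 D2 f a J hI D1' D2' f' a'
        (by rw [a1.2, b1.2.2.2.2]; exact hc) ?_ ?_
      · intro h hh
        rcases hD h hh with h1 | h1
        · exact Or.inl h1
        · right; rw [h1]; exact evt_self B (t + 1) b1.2.2.1
      · rw [a1.2, b1.2.2.2.2, if_neg b1.1, if_pos a1.1]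
        omega
    · exfalso
      rcases hfull with h | h
      · rw [h] at a1; exact a1.1 b1.1
      · omega
    · -- both fill
      have hAB : A.C t = B.C t := by
        rcases hfull with h | h
        · exact h
        · omega
      have hD1 : D1 = ∅ := by
        rw [Finset.eq_empty_iff_forall_notMem]
        intro h hh
        have := hcore.s1 h hh
        rw [hAB] at this
        tauto
      have hD2 : D2 = ∅ := by
        rw [Finset.eq_empty_iff_forall_notMem]
        intro h hh
        have := hcore.s21 h hh
        simp [hD1] at this
      subst hD1 hD2
      refine inv_finish A B ω t (by omega) ∅ ∅ f a J hI ∅ ∅ f a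
        ⟨by simp, by simp, by simp, by simp, by simp, by simp, by simp⟩ (by simp) ?_
      rw [a1.2.2, b1.2.2, hAB, if_neg b1.1]
      simp
    · omega
    · -- A evicts, B hits
      obtain ⟨D1', D2', f', a', hc, hD, hcount⟩ :=
        step_c (A.C t) (B.C t) (fun s => ω (lst σ s t)) (fun s => ω (lst σ s (t + 1))) ω
          (nextReq σ T) T t D1 D2 f a (σ (t + 1)) (A.p (t + 1)) hW a1.1 b1.1 hcore
      refine inv_finish A B ω t (by omega) D1 D2 f a J hI D1' D2' f' a'
        (by rw [a1.2.2.2.2, b1.2]; exact hc) ?_ ?_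
      · intro h hh
        exact Or.inl (hD h hh)
      · rw [a1.2.2.2.2, b1.2, if_pos b1.1, if_neg a1.1]
        omega
    · omega
    · -- both evict
      have hmax : ∀ g ∈ B.C t, ω (lst σ g t) ≤ ω (lst σ (B.p (t + 1)) t) := by
        intro g hg
        exact blind_max B ω hB (t + 1) b1.2.2.1 g hg
      obtain ⟨D1', D2', f', a', hc, hD, hcount⟩ :=
        step_d (A.C t) (B.C t) (fun s => ω (lst σ s t)) (fun s => ω (lst σ s (t + 1))) ω
          (nextReq σ T) T t D1 D2 f a (σ (t + 1)) (A.p (t + 1)) (B.p (t + 1)) hW a1.1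
          b1.1 a1.2.2.2.1 b1.2.2.2.1 hcard hmax hcore
      refine inv_finish A B ω t (by omega) D1 D2 f a J hI D1' D2' f' a'
        (by rw [a1.2.2.2.2, b1.2.2.2.2]; exact hc) ?_ ?_
      · intro h hh
        exact Or.inl (hD h hh)
      · rw [a1.2.2.2.2, b1.2.2.2.2, if_neg b1.1, if_neg a1.1]
        omega

/-- The bound in natural numbers. -/
lemma main_bound (A B : CacheRun S k T σ) (ω : ℕ → ℕ) (hB : IsBlindOracle B ω) :
    k * misses B ≤ k * (3 * misses A) + 3 * totalLoss σ T ω := by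
  obtain ⟨D1, D2, f, a, J, hcore, hJ, hmis, hsum⟩ := inv_exists A B ω hB T le_rfl
  have hD1 : D1.card ≤ (A.C T \ B.C T).card := Finset.card_le_card (by
    intro h hh; simpa using hcore.s1 h hh)
  have hD2 : D2.card ≤ D1.card := Finset.card_le_card hcore.s21
  have hmis' : misses B ≤ 2 * misses A + J.card := by
    change missUp B T ≤ 2 * missUp A T + J.card
    omega
  have hcov : ∑ m ∈ J, (m - evt B (σ m) (m - 1)) ≤ totalLoss σ T ω :=
    le_trans (by omega) (sum_wrongAt σ T ω)
  have hreq : ∀ m ∈ J, ∃ i, 1 ≤ i ∧ i ≤ m - 1 ∧ σ i = σ m := by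
    intro m hm
    have := hJ m hm
    exact C_requested A (m - 1) (by omega) _ this.2.2.2
  -- tail and non-tail charged misses
  set J1 := J.filter (fun m => evt B (σ m) (m - 1) + k ≤ T) with hJ1
  set J2 := J.filter (fun m => ¬ (evt B (σ m) (m - 1) + k ≤ T)) with hJ2
  have hcardJ : J1.card + J2.card = J.card := Finset.card_filter_add_card_filter_not _
  have htail : J2.card ≤ misses A := by
    by_cases hne : J2 = ∅
    · rw [hne]; simp
    · obtain ⟨m, hm⟩ := Finset.nonempty_iff_ne_empty.2 hne
      have hmJ := (Finset.mem_filter.1 hm).1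
      have hm' := hJ m hmJ
      have hE := (evt_spec B (σ m) (m - 1) (by omega) (hreq m hmJ) hm'.2.2.1).1
      have hk : k ≤ misses A := by
        have h1 := hE.2.1
        have h2 := hE.2.2.2
        set e := evt B (σ m) (m - 1)
        have h3 : (A.C (e - 1)).card = k := by
          rcases same_or_full A B (e - 1) (by omega) with h | h
          · rw [h]; exact h2
          · exact h.1
        have h4 := card_le_missUp A (e - 1) (by omega)
        have h5 := missUp_mono A (e - 1) (by omega)
        omega
      refine le_trans ?_ hk
      have hsub : J2 ⊆ Finset.Ioc (T - k) T := by
        intro m hm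
        have hmJ := Finset.mem_filter.1 hm
        have hm' := hJ m hmJ.1
        have := evt_le B (σ m) (m - 1)
        rw [Finset.mem_Ioc]
        omega
      have := Finset.card_le_card hsub
      rw [Nat.card_Ioc] at this
      omega
  have hinv : ∑ m ∈ J1, (k - (m - evt B (σ m) (m - 1))) ≤ 2 * totalLoss σ T ω := by
    apply sum_inv B ω hB
    intro m hm
    have hmJ := Finset.mem_filter.1 hm
    have hm' := hJ m hmJ.1
    exact ⟨hm'.1, hm'.2.1, hm'.2.2.1, hreq m hmJ.1, hmJ.2⟩
  have hcov1 : ∑ m ∈ J1, (m - evt B (σ m) (m - 1)) ≤ totalLoss σ T ω :=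
    le_trans (Finset.sum_le_sum_of_subset (Finset.filter_subset _ _)) hcov
  have hJ1c : J1.card * k ≤ 3 * totalLoss σ T ω := by
    have : J1.card * k ≤ ∑ m ∈ J1, ((m - evt B (σ m) (m - 1)) +
        (k - (m - evt B (σ m) (m - 1)))) := by
      rw [← smul_eq_mul]
      apply Finset.card_nsmul_le_sum
      intro m _
      omega
    rw [Finset.sum_add_distrib] at this
    omega
  have : misses B ≤ 3 * misses A + J1.card := by omega
  calc k * misses B ≤ k * (3 * misses A + J1.card) := Nat.mul_le_mul_left _ this
    _ = k * (3 * misses A) + J1.card * k := by ring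
    _ ≤ _ := by omega

end

/-- For BlindOracle, `OBJ_B ≤ 3·OPT + 3η/k`; in particular its
competitive ratio is at most `3 + (3/k)·(η/OPT)`. -/
theorem stmt7 {S : Type} [DecidableEq S] (k T : ℕ) (hk : 1 ≤ k) (σ : ℕ → S) (ω : ℕ → ℕ)
    (B A : CacheRun S k T σ) (hB : IsBlindOracle B ω) (hA : IsBelady A) :
    (misses B : ℝ) ≤ 3 * misses A + 3 * totalLoss σ T ω / k ∧
    (0 < misses A →
      (misses B : ℝ) / misses A ≤ 3 + 3 / k * ((totalLoss σ T ω : ℝ) / misses A)) := by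
  have hk0 : (0 : ℝ) < k := by exact_mod_cast hk
  have hmain : (k : ℝ) * misses B ≤ k * (3 * misses A) + 3 * totalLoss σ T ω := by
    exact_mod_cast main_bound A B ω hB
  have h1 : (misses B : ℝ) ≤ 3 * misses A + 3 * totalLoss σ T ω / k := by
    rw [← sub_le_iff_le_add', le_div_iff₀ hk0]
    linarith
  refine ⟨h1, fun hpos => ?_⟩
  have hpos' : (0 : ℝ) < misses A := by exact_mod_cast hpos
  rw [div_le_iff₀ hpos']
  calc (misses B : ℝ) ≤ 3 * misses A + 3 * totalLoss σ T ω / k := h1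
    _ = (3 + 3 / k * ((totalLoss σ T ω : ℝ) / misses A)) * misses A := by
      field_simp

end Caching
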